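/- Let D ⊂ ℂ be a bounded domain admitting a C^∞ defining function, let p ∈ ∂D, and let F : D → D be a holomorphic map. If F(z₀) = z₀ for some z₀ ∈ D and F(z) = z + o(|z−p|) as z → p within D, then F(z) = z for all z ∈ D. -/

import Mathlib

open Complex Topology Filter Metric Set Function

noncomputable section

/-- A `C²` function vanishing at `p` with nonzero differential there is positive on some disc whose
boundary circle passes through `p`. -/
theorem exists_ball_subset_pos {ρ : ℂ → ℝ} (hρ : ContDiff ℝ 2 ρ) {p : ℂ} (hp : ρ p = 0)
    (hd : fderiv ℝ ρ p ≠ 0) : ∃ c, 0 < ‖p - c‖ ∧ ball c ‖p - c‖ ⊆ {z | 0 < ρ z} := by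
  obtain ⟨K, U, hU, hK⟩ := ((hρ.fderiv_right (m := 1) (by norm_num)).contDiffAt
    (x := p)).exists_lipschitzOnWith
  obtain ⟨δ, hδ, hδU⟩ := Metric.mem_nhds_iff.1 hU
  set g : ℂ := (InnerProductSpace.toDual ℝ ℂ).symm (fderiv ℝ ρ p) with hg
  have hgi : ∀ v, inner ℝ g v = fderiv ℝ ρ p v := fun v => by
    rw [hg, InnerProductSpace.toDual_symm_apply]
  have hg0 : 0 < ‖g‖ := by
    rw [norm_pos_iff, hg]
    simpa using hd
  have hK1 : (0 : ℝ) < 2 * (K + 1) := by positivity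
  obtain ⟨τ, hτ, hτ1, hτ2⟩ : ∃ τ : ℝ, 0 < τ ∧ τ * (2 * (K + 1)) ≤ 1 ∧ 2 * (τ * ‖g‖) ≤ δ := by
    refine ⟨min (1 / (2 * (K + 1))) (δ / (2 * ‖g‖)), by positivity, ?_, ?_⟩
    · rw [← le_div_iff₀ hK1]
      exact min_le_left _ _
    · have := min_le_right (1 / (2 * ((K : ℝ) + 1))) (δ / (2 * ‖g‖))
      rw [le_div_iff₀ (by positivity)] at this
      linarith
  have hnorm : ‖p - (p + τ • g)‖ = τ * ‖g‖ := by
    simp [abs_of_pos hτ]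
  refine ⟨p + τ • g, by rw [hnorm]; positivity, fun z hz => ?_⟩
  rw [hnorm, mem_ball, dist_eq_norm] at hz
  set v := z - p with hv
  have hzv : z - (p + τ • g) = v - τ • g := by rw [hv]; ring
  rw [hzv] at hz
  have hvδ : ‖v‖ < δ := by
    have : ‖v‖ ≤ ‖v - τ • g‖ + ‖τ • g‖ := by simpa using norm_add_le (v - τ • g) (τ • g)
    rw [norm_smul, Real.norm_of_nonneg hτ.le] at this
    linarith
  have hsq : ‖v - τ • g‖ ^ 2 < (τ * ‖g‖) ^ 2 := by gcongr
  rw [norm_sub_sq_real, inner_smul_right, real_inner_comm, hgi, norm_smul,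
    Real.norm_of_nonneg hτ.le] at hsq
  have htaylor : ‖ρ z - ρ p - fderiv ℝ ρ p (z - p)‖ ≤ (K * ‖v‖) * ‖z - p‖ := by
    refine (convex_closedBall p ‖v‖).norm_image_sub_le_of_norm_fderiv_le' (𝕜 := ℝ)
      (fun x _ => (hρ.differentiable (by norm_num)) x) (fun x hx => ?_)
      (mem_closedBall_self (norm_nonneg _)) (by simp [hv, dist_eq_norm])
    rw [mem_closedBall] at hx
    have := hK.dist_le_mul x (hδU (mem_ball.2 (hx.trans_lt hvδ))) p (hδU (mem_ball_self hδ))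
    rw [dist_eq_norm] at this
    exact this.trans (by gcongr)
  rw [hp, ← hv, Real.norm_eq_abs, abs_le] at htaylor
  have h1 := htaylor.1
  have hpos : 0 < ‖v‖ := by
    rw [norm_pos_iff]
    rintro h0
    rw [h0] at hsq
    simp at hsq
  have h2 : ‖v‖ ^ 2 < 2 * τ * fderiv ℝ ρ p v := by linarith
  have h3 : τ * (2 * (K + 1)) * ‖v‖ ^ 2 ≤ 1 * ‖v‖ ^ 2 := by gcongr
  have h4 : 2 * τ * ((K + 1) * ‖v‖ ^ 2) < 2 * τ * fderiv ℝ ρ p v := by linarith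
  have h5 := lt_of_mul_lt_mul_left h4 (by positivity)
  show 0 < ρ z
  nlinarith

/-- The Blaschke factor of the exterior of a disc vanishing at a given exterior point. -/
theorem exists_exterior_blaschke {e z₀ : ℂ} {s : ℝ} (hs : 0 < s) (hz₀ : s < ‖z₀ - e‖) :
    ∃ (f : ℂ → ℂ) (L : ℝ), 0 < L ∧ DifferentiableOn ℂ f {z | s ≤ ‖z - e‖} ∧ f z₀ = 0 ∧
      (∀ z, s ≤ ‖z - e‖ → ‖f z‖ ≤ 1) ∧ (∀ z, ‖z - e‖ = s → ‖f z‖ = 1) ∧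
      ∀ z w, s ≤ ‖z - e‖ → s ≤ ‖w - e‖ → ‖f z - f w‖ ≤ L * ‖z - w‖ := by
  set b := z₀ - e with hb
  set q : ℂ → ℂ := fun z => s ^ 2 - (starRingEnd ℂ) b * (z - e) with hq
  set d := s * (‖b‖ - s) with hd
  have hd0 : 0 < d := mul_pos hs (by linarith)
  have hqd : ∀ z, s ≤ ‖z - e‖ → d ≤ ‖q z‖ := fun z hz => by
    have h1 : ‖(starRingEnd ℂ) b * (z - e)‖ - ‖(s : ℂ) ^ 2‖ ≤ ‖q z‖ := by
      rw [hq, norm_sub_rev (((s : ℂ)) ^ 2)]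
      exact norm_sub_norm_le _ _
    rw [norm_mul, RCLike.norm_conj, norm_pow, Complex.norm_real, Real.norm_of_nonneg hs.le] at h1
    have h2 : ‖b‖ * s ≤ ‖b‖ * ‖z - e‖ := by gcongr
    rw [hd]; linarith
  have hq0 : ∀ z, s ≤ ‖z - e‖ → q z ≠ 0 := fun z hz =>
    norm_pos_iff.1 (hd0.trans_le (hqd z hz))
  have hid : ∀ z, ‖q z‖ ^ 2 - (s * ‖z - z₀‖) ^ 2 = (‖z - e‖ ^ 2 - s ^ 2) * (‖b‖ ^ 2 - s ^ 2) := by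
    intro z
    have : z - z₀ = (z - e) - b := by rw [hb]; ring
    rw [this, mul_pow, hq]
    simp only [← Complex.normSq_eq_norm_sq, Complex.normSq_apply]
    simp [sq]
    ring
  refine ⟨fun z => s * (z - z₀) / q z, s * (‖b‖ ^ 2 - s ^ 2) / d ^ 2, ?_, ?_, by simp, ?_, ?_, ?_⟩
  · have : s ^ 2 < ‖b‖ ^ 2 := by gcongr
    have : 0 < ‖b‖ ^ 2 - s ^ 2 := by linarith
    positivity
  · refine DifferentiableOn.div (by fun_prop) (by fun_prop) hq0
  · intro z hz
    have h1 : 0 ≤ (‖z - e‖ ^ 2 - s ^ 2) * (‖b‖ ^ 2 - s ^ 2) :=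
      mul_nonneg (sub_nonneg.2 (by gcongr)) (sub_nonneg.2 (by gcongr))
    rw [norm_div, div_le_one (hd0.trans_le (hqd z hz)), norm_mul, Complex.norm_real,
      Real.norm_of_nonneg hs.le]
    refine le_of_sq_le_sq ?_ (norm_nonneg _)
    linarith [hid z]
  · intro z hz
    rw [norm_div, div_eq_one_iff_eq (hd0.trans_le (hqd z hz.ge)).ne', norm_mul, Complex.norm_real,
      Real.norm_of_nonneg hs.le]
    have := hid z
    rw [hz, sub_self, zero_mul, sub_eq_zero] at this
    exact ((sq_eq_sq₀ (norm_nonneg _) (by positivity)).1 this).symm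
  · intro z w hz hw
    have key : (s : ℂ) * (z - z₀) / q z - s * (w - z₀) / q w
        = ((s * (s ^ 2 - ‖b‖ ^ 2) : ℝ) : ℂ) * (z - w) / (q z * q w) := by
      have hbb : (((‖b‖ : ℝ) : ℂ)) ^ 2 = (starRingEnd ℂ) b * b := (Complex.conj_mul' b).symm
      rw [div_sub_div _ _ (hq0 z hz) (hq0 w hw)]
      congr 1
      push_cast
      rw [hbb, hq]
      simp only [hb]
      ring
    simp only [key]
    have hsb : s ^ 2 < ‖b‖ ^ 2 := by gcongr
    rw [norm_div, norm_mul, Complex.norm_real, norm_mul, Real.norm_of_nonneg hs.le,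
      Real.norm_of_nonpos (by linarith : s ^ 2 - ‖b‖ ^ 2 ≤ 0), neg_sub, norm_mul (q z),
      div_mul_eq_mul_div]
    have : 0 ≤ ‖b‖ ^ 2 - s ^ 2 := by linarith
    gcongr
    rw [sq]
    exact mul_le_mul (hqd z hz) (hqd w hw) hd0.le (norm_nonneg _)

/-- A bounded holomorphic function on a disc that is small on the concentric disc of half the radius
is dominated by a power of the normalized distance to the centre. -/
theorem norm_le_pow_of_norm_le_half_pow {g : ℂ → ℂ} {c z : ℂ} {r : ℝ} {k : ℕ}
    (hg : DifferentiableOn ℂ g (ball c r)) (h1 : ∀ z ∈ ball c r, ‖g z‖ ≤ 1)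
    (h2 : ∀ z ∈ closedBall c (r / 2), ‖g z‖ ≤ (1 / 2) ^ k) (hz : z ∈ ball c r)
    (hz2 : r / 2 < ‖z - c‖) : ‖g z‖ ≤ (‖z - c‖ / r) ^ k := by
  have hr : 0 < r := nonempty_ball.1 ⟨z, hz⟩
  rw [mem_ball, dist_eq_norm] at hz
  have hlim : Tendsto (fun R : ℝ => (‖z - c‖ / R) ^ k) (𝓝[<] r) (𝓝 ((‖z - c‖ / r) ^ k)) :=
    ((tendsto_const_nhds.div (tendsto_id.mono_left nhdsWithin_le_nhds) hr.ne').pow k)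
  refine ge_of_tendsto hlim ?_
  filter_upwards [Ioo_mem_nhdsLT hz] with R hR
  have hR0 : 0 < R := (norm_nonneg _).trans_lt hR.1
  set V := ball c R \ closedBall c (r / 2) with hV
  have hcl : closure V ⊆ closedBall c R ∩ {w | r / 2 ≤ ‖w - c‖} := by
    refine closure_minimal (fun w hw => ⟨ball_subset_closedBall hw.1, ?_⟩)
      (isClosed_closedBall.inter (isClosed_le (by fun_prop) (by fun_prop)))
    have := hw.2
    rw [mem_closedBall, dist_eq_norm, not_le] at this
    exact this.le
  have hVo : IsOpen V := isOpen_ball.sdiff isClosed_closedBall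
  have hne : ∀ w, r / 2 ≤ ‖w - c‖ → (w - c) ^ k ≠ 0 := fun w hw =>
    pow_ne_zero _ (norm_pos_iff.1 (lt_of_lt_of_le (by positivity) hw))
  have hdiff : DifferentiableOn ℂ (fun w => g w / (w - c) ^ k) (closure V) := by
    refine DifferentiableOn.div (hg.mono fun w hw => ?_) (by fun_prop) fun w hw =>
      hne w (hcl hw).2
    exact mem_ball.2 ((mem_closedBall.1 (hcl hw).1).trans_lt hR.2)
  have hfr : ∀ w ∈ frontier V, ‖g w / (w - c) ^ k‖ ≤ 1 / R ^ k := by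
    intro w hw
    have hw' := hcl (frontier_subset_closure hw)
    rw [mem_inter_iff, mem_closedBall, dist_eq_norm] at hw'
    have hwV : w ∉ V := by
      have := hw.2
      rwa [hVo.interior_eq] at this
    have hw0 : 0 < ‖w - c‖ := lt_of_lt_of_le (by positivity) hw'.2
    rw [norm_div, norm_pow, div_le_div_iff₀ (by positivity) (by positivity), one_mul]
    rcases hw'.1.lt_or_eq with hlt | heq
    · have hmem : w ∈ closedBall c (r / 2) := by
        by_contra h
        exact hwV ⟨mem_ball_iff_norm.2 hlt, h⟩
      calc ‖g w‖ * R ^ k ≤ (1 / 2) ^ k * r ^ k := by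
            gcongr
            exacts [h2 w hmem, hR.2.le]
        _ = (r / 2) ^ k := by rw [← mul_pow]; ring
        _ ≤ ‖w - c‖ ^ k := by gcongr; exact hw'.2
    · rw [heq]
      refine mul_le_of_le_one_left (by positivity) (h1 w (mem_ball_iff_norm.2 ?_))
      rw [heq]; exact hR.2
  have hzV : z ∈ V := ⟨mem_ball_iff_norm.2 hR.1, by
    rw [mem_closedBall, dist_eq_norm, not_le]; exact hz2⟩
  have := Complex.norm_le_of_forall_mem_frontier_norm_le (isBounded_ball.subset sdiff_subset)
    hdiff.diffContOnCl hfr (subset_closure hzV)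
  have hz0 : 0 < ‖z - c‖ := lt_trans (by positivity) hz2
  rw [norm_div, norm_pow, div_le_div_iff₀ (by positivity) (by positivity), one_mul] at this
  rwa [div_pow, le_div_iff₀ (by positivity)]

/-- A bounded family of holomorphic functions converges locally uniformly along any ultrafilter. -/
theorem exists_tendstoLocallyUniformlyOn_ultrafilter {ι : Type*} (U : Ultrafilter ι) {D : Set ℂ}
    (hD : IsOpen D) {f : ι → ℂ → ℂ} {M : ℝ} (hf : ∀ i, DifferentiableOn ℂ (f i) D)
    (hM : ∀ i, ∀ z ∈ D, ‖f i z‖ ≤ M) :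
    ∃ g, TendstoLocallyUniformlyOn f g U D := by
  have hlim : ∀ z, ∃ y, z ∈ D → Tendsto (fun i => f i z) U (𝓝 y) := by
    intro z
    by_cases hz : z ∈ D
    · obtain ⟨y, -, hy⟩ := (isCompact_closedBall (0 : ℂ) M).ultrafilter_le_nhds'
        (U.map fun i => f i z) (show ∀ᶠ i in (U : Filter ι), f i z ∈ closedBall 0 M from
          Eventually.of_forall fun i => by simpa using hM i z hz)
      exact ⟨y, fun _ => hy⟩
    · exact ⟨0, fun h => absurd h hz⟩
  choose g hg using hlim
  refine ⟨g, Metric.tendstoLocallyUniformlyOn_iff.2 fun ε hε z hz => ?_⟩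
  obtain ⟨R, hR, hRD⟩ := Metric.isOpen_iff.1 hD z hz
  have hM0 : 0 ≤ M := by
    obtain ⟨i⟩ := U.neBot.nonempty
    exact (norm_nonneg _).trans (hM i z hz)
  have hlip : ∀ i, ∀ w ∈ ball z R, dist (f i w) (f i z) ≤ 2 * M / R * dist w z := fun i w hw =>
    Complex.dist_le_div_mul_dist_of_mapsTo_ball ((hf i).mono hRD) (fun x hx => by
      rw [mem_closedBall, dist_eq_norm]
      linarith [norm_sub_le (f i x) (f i z), hM i x (hRD hx), hM i z hz]) hw
  have hglip : ∀ w ∈ ball z R, dist (g w) (g z) ≤ 2 * M / R * dist w z := fun w hw =>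
    le_of_tendsto ((hg w (hRD hw)).dist (hg z hz)) (Eventually.of_forall fun i => hlip i w hw)
  have hsmall : ∀ᶠ w in 𝓝 z, 2 * M / R * dist w z < ε / 3 := by
    have : Tendsto (fun w => 2 * M / R * dist w z) (𝓝 z) (𝓝 (2 * M / R * dist z z)) :=
      (by fun_prop : Continuous fun w => 2 * M / R * dist w z).tendsto z
    rw [dist_self, mul_zero] at this
    exact this.eventually (gt_mem_nhds (by positivity))
  refine ⟨{w | 2 * M / R * dist w z < ε / 3} ∩ ball z R,
    mem_nhdsWithin_of_mem_nhds (inter_mem hsmall (ball_mem_nhds z hR)), ?_⟩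
  filter_upwards [Metric.tendsto_nhds.1 (hg z hz) (ε / 3) (by positivity)] with i hi w hw
  have h1 := hlip i w hw.2
  have h2 := hglip w hw.2
  have h3 : 2 * M / R * dist w z < ε / 3 := hw.1
  have h4 := dist_triangle4 (g w) (g z) (f i z) (f i w)
  rw [dist_comm (g z), dist_comm (f i z) (f i w)] at h4
  linarith

theorem differentiableOn_birkhoffAverage {D : Set ℂ} {F φ : ℂ → ℂ} (hF : DifferentiableOn ℂ F D)
    (hmaps : MapsTo F D D) (hφ : DifferentiableOn ℂ φ D) (n : ℕ) :
    DifferentiableOn ℂ (birkhoffAverage ℂ F φ n) D := by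
  unfold birkhoffAverage birkhoffSum
  exact (DifferentiableOn.fun_sum fun k _ => hφ.comp (hF.iterate hmaps k)
    (hmaps.iterate k)).const_smul (n : ℂ)⁻¹

theorem norm_birkhoffAverage_le {D : Set ℂ} {F φ : ℂ → ℂ} (hmaps : MapsTo F D D) {M : ℝ}
    (hM : ∀ z ∈ D, ‖φ z‖ ≤ M) (n : ℕ) {z : ℂ} (hz : z ∈ D) :
    ‖birkhoffAverage ℂ F φ n z‖ ≤ M := by
  rcases Nat.eq_zero_or_pos n with rfl | hn
  · simpa using (norm_nonneg _).trans (hM z hz)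
  · have hn' : (0 : ℝ) < n := by exact_mod_cast hn
    rw [birkhoffAverage, birkhoffSum, norm_smul, norm_inv, Complex.norm_natCast,
      inv_mul_le_iff₀ hn']
    refine (norm_sum_le_of_le _ fun k _ => hM _ (hmaps.iterate k hz)).trans ?_
    simp

/-- The Birkhoff averages of a bounded holomorphic function have an invariant locally uniform limit
along the hyperfilter. -/
theorem exists_invariant_limit {D : Set ℂ} (hD : IsOpen D) {F φ : ℂ → ℂ}
    (hF : DifferentiableOn ℂ F D) (hmaps : MapsTo F D D) (hφ : DifferentiableOn ℂ φ D) {M : ℝ}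
    (hM : ∀ z ∈ D, ‖φ z‖ ≤ M) :
    ∃ P, DifferentiableOn ℂ P D ∧
      TendstoLocallyUniformlyOn (birkhoffAverage ℂ F φ) P (hyperfilter ℕ : Filter ℕ) D ∧
      ∀ z ∈ D, P (F z) = P z := by
  obtain ⟨P, hP⟩ := exists_tendstoLocallyUniformlyOn_ultrafilter (hyperfilter ℕ) hD
    (differentiableOn_birkhoffAverage hF hmaps hφ)
    (fun n z hz => norm_birkhoffAverage_le hmaps hM n hz)
  refine ⟨P, hP.differentiableOn
    (Eventually.of_forall (differentiableOn_birkhoffAverage hF hmaps hφ)) hD, hP, fun z hz => ?_⟩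
  have h1 := (hP.tendsto_at (hmaps hz)).sub (hP.tendsto_at hz)
  have h2 : Tendsto (fun n => birkhoffAverage ℂ F φ n (F z) - birkhoffAverage ℂ F φ n z)
      (hyperfilter ℕ : Filter ℕ) (𝓝 0) := by
    refine (tendsto_birkhoffAverage_apply_sub_birkhoffAverage ℂ ?_).mono_left
      Nat.hyperfilter_le_atTop
    refine (isBounded_closedBall (x := (0 : ℂ)) (r := M)).subset ?_
    rintro _ ⟨k, rfl⟩
    simpa using hM _ (hmaps.iterate k hz)
  exact sub_eq_zero.1 (tendsto_nhds_unique h1 h2)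

/-- A germ invariant under a holomorphic germ whose multiplier is not a root of unity is constant. -/
theorem eventually_eq_zero_of_invariant {F P : ℂ → ℂ} {z₀ : ℂ} (hF : DifferentiableAt ℂ F z₀)
    (hfix : F z₀ = z₀) (hP : AnalyticAt ℂ P z₀) (hP0 : P z₀ = 0)
    (hinv : ∀ᶠ z in 𝓝 z₀, P (F z) = P z) (hroot : ∀ k : ℕ, k ≠ 0 → deriv F z₀ ^ k ≠ 1) :
    ∀ᶠ z in 𝓝 z₀, P z = 0 := by
  by_contra hne
  obtain ⟨k, g, hg, hg0, hPg⟩ := hP.exists_eventuallyEq_pow_smul_nonzero_iff.2 hne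
  have hk : k ≠ 0 := by
    rintro rfl
    have := hPg.self_of_nhds
    rw [hP0] at this
    simp [hg0.symm] at this
  have hFc : Tendsto F (𝓝 z₀) (𝓝 z₀) := by
    simpa [ContinuousAt, hfix] using hF.continuousAt
  have hslope : Tendsto (fun z => slope F z₀ z ^ k * g (F z)) (𝓝[≠] z₀)
      (𝓝 (deriv F z₀ ^ k * g z₀)) :=
    (hF.hasDerivAt.tendsto_slope.pow k).mul
      ((hg.continuousAt.tendsto.comp hFc).mono_left nhdsWithin_le_nhds)
  have heq : ∀ᶠ z in 𝓝[≠] z₀, slope F z₀ z ^ k * g (F z) = g z := by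
    filter_upwards [hinv.filter_mono nhdsWithin_le_nhds, hPg.filter_mono nhdsWithin_le_nhds,
      (hFc.eventually hPg).filter_mono nhdsWithin_le_nhds, self_mem_nhdsWithin] with z h1 h2 h3 h4
    have hz : z - z₀ ≠ 0 := sub_ne_zero.2 h4
    rw [h1, h2] at h3
    have hs : F z - z₀ = (z - z₀) * slope F z₀ z := by
      rw [slope_def_field, hfix]
      field_simp
    rw [hs, smul_eq_mul, smul_eq_mul, mul_pow, mul_assoc] at h3
    exact (mul_left_cancel₀ (pow_ne_zero k hz) h3).symm
  have hlim := tendsto_nhds_unique (hslope.congr' heq)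
    (hg.continuousAt.tendsto.mono_left nhdsWithin_le_nhds)
  exact hroot k hk (mul_right_cancel₀ hg0 (hlim.trans (one_mul _).symm))

/-- Cartan's uniqueness theorem for bounded planar domains. -/
theorem eqOn_id_of_deriv_eq_one {D : Set ℂ} (hD : IsOpen D) (hconn : IsPreconnected D)
    (hbd : Bornology.IsBounded D) {F : ℂ → ℂ} (hF : DifferentiableOn ℂ F D) (hmaps : MapsTo F D D)
    {z₀ : ℂ} (hz₀ : z₀ ∈ D) (hfix : F z₀ = z₀) (hderiv : deriv F z₀ = 1) : EqOn F id D := by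
  obtain ⟨M, hM⟩ := hbd.exists_norm_le
  obtain ⟨A, hA, hlim, hinv⟩ := exists_invariant_limit hD hF hmaps differentiableOn_id hM
  have hFd : HasDerivAt F 1 z₀ := hderiv ▸ (hF.differentiableAt (hD.mem_nhds hz₀)).hasDerivAt
  have hAd : deriv A z₀ = 1 := by
    have h1 := (hlim.deriv (Eventually.of_forall
      (differentiableOn_birkhoffAverage hF hmaps differentiableOn_id)) hD).tendsto_at hz₀
    refine tendsto_nhds_unique h1 (tendsto_const_nhds.congr' ?_)
    filter_upwards [(eventually_gt_atTop 0).filter_mono Nat.hyperfilter_le_atTop] with n hn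
    have hn' : (n : ℂ) ≠ 0 := by exact_mod_cast hn.ne'
    have hit : ∀ k, HasDerivAt F^[k] 1 z₀ := fun k => by
      simpa using HasDerivAt.iterate z₀ hFd hfix k
    have : HasDerivAt (birkhoffAverage ℂ F id n) ((n : ℂ)⁻¹ • ∑ _k ∈ Finset.range n, (1 : ℂ)) z₀ := by
      unfold birkhoffAverage birkhoffSum
      exact (HasDerivAt.fun_sum fun k _ => hit k).const_smul (n : ℂ)⁻¹
    rw [comp_apply, this.deriv]
    simp [hn']
  have hAan := (hA.analyticOnNhd hD) z₀ hz₀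
  have hstrict : HasStrictDerivAt A 1 z₀ := hAd ▸ hAan.hasStrictDerivAt
  have hinj := hstrict.eventually_left_inverse one_ne_zero
  have hFc : Tendsto F (𝓝 z₀) (𝓝 z₀) := by
    simpa [ContinuousAt, hfix] using hFd.continuousAt
  refine (hF.analyticOnNhd hD).eqOn_of_preconnected_of_eventuallyEq
    (differentiableOn_id.analyticOnNhd hD) hconn hz₀ ?_
  filter_upwards [hinj, hFc.eventually hinj, hD.mem_nhds hz₀] with z h1 h2 h3
  rw [hinv z h3, h1] at h2
  exact h2.symm

theorem iterate_sub_isLittleO {D : Set ℂ} {F : ℂ → ℂ} {p : ℂ} (hmaps : MapsTo F D D)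
    (ho : (fun z => F z - z) =o[𝓝[D] p] fun z => z - p) (n : ℕ) :
    (fun z => F^[n] z - z) =o[𝓝[D] p] fun z => z - p := by
  induction n with
  | zero => simp
  | succ n ih =>
    have hbig : (fun z => F^[n] z - p) =O[𝓝[D] p] fun z => z - p := by
      simpa using ih.isBigO.add (Asymptotics.isBigO_refl (fun z => z - p) _)
    have htend : Tendsto F^[n] (𝓝[D] p) (𝓝[D] p) := by
      refine tendsto_nhdsWithin_iff.2 ⟨?_, ?_⟩
      · have h0 : Tendsto (fun z => z - p) (𝓝[D] p) (𝓝 0) := by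
          have : Tendsto (fun z => z - p) (𝓝 p) (𝓝 (p - p)) :=
            (by fun_prop : Continuous fun z => z - p).tendsto p
          rw [sub_self] at this
          exact this.mono_left nhdsWithin_le_nhds
        exact tendsto_sub_nhds_zero_iff.1 (hbig.trans_tendsto h0)
      · filter_upwards [self_mem_nhdsWithin] with z hz using hmaps.iterate n hz
    have h1 := (ho.comp_tendsto htend).trans_isBigO hbig
    refine (h1.add ih).congr_left fun z => ?_
    simp [iterate_succ_apply']

theorem norm_radial_sub_left {p c : ℂ} {t : ℝ} (ht : 0 ≤ t) :
    ‖p + t • (c - p) - p‖ = t * ‖p - c‖ := by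
  rw [add_sub_cancel_left, norm_smul, Real.norm_of_nonneg ht, norm_sub_rev]

theorem norm_radial_sub_right {p c : ℂ} {t : ℝ} (ht : t ≤ 1) :
    ‖p + t • (c - p) - c‖ = (1 - t) * ‖p - c‖ := by
  have : p + t • (c - p) - c = (1 - t) • (p - c) := by module
  rw [this, norm_smul, Real.norm_of_nonneg (by linarith)]

theorem radial_mem_ball {p c : ℂ} (hc : 0 < ‖p - c‖) {t : ℝ} (ht : t ∈ Ioo (0 : ℝ) 1) :
    p + t • (c - p) ∈ ball c ‖p - c‖ := by
  rw [mem_ball_iff_norm, norm_radial_sub_right ht.2.le]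
  nlinarith [ht.1]

theorem tendsto_radial {D : Set ℂ} {p c : ℂ} (hc : 0 < ‖p - c‖) (hcD : ball c ‖p - c‖ ⊆ D) :
    Tendsto (fun t : ℝ => p + t • (c - p)) (𝓝[>] 0) (𝓝[D] p) := by
  refine tendsto_nhdsWithin_iff.2 ⟨?_, ?_⟩
  · have : Tendsto (fun t : ℝ => p + t • (c - p)) (𝓝 0) (𝓝 (p + (0 : ℝ) • (c - p))) :=
      (by fun_prop : Continuous fun t : ℝ => p + t • (c - p)).tendsto 0
    rw [zero_smul, add_zero] at this
    exact this.mono_left nhdsWithin_le_nhds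
  · filter_upwards [Ioo_mem_nhdsGT one_pos] with t ht using hcD (radial_mem_ball hc ht)

/-- If a holomorphic self-map is tangent to the identity at a boundary point admitting interior and
exterior tangent discs, then its multiplier at an interior fixed point is a root of unity. -/
theorem exists_deriv_pow_eq_one {D : Set ℂ} (hD : IsOpen D) (hconn : IsPreconnected D)
    {F : ℂ → ℂ} (hF : DifferentiableOn ℂ F D) (hmaps : MapsTo F D D) {z₀ : ℂ} (hz₀ : z₀ ∈ D)
    (hfix : F z₀ = z₀) {p c e : ℂ} (hc : 0 < ‖p - c‖) (hcD : ball c ‖p - c‖ ⊆ D)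
    (he : 0 < ‖p - e‖) (heD : Disjoint (ball e ‖p - e‖) D)
    (ho : (fun z => F z - z) =o[𝓝[D] p] fun z => z - p) :
    ∃ k : ℕ, k ≠ 0 ∧ deriv F z₀ ^ k = 1 := by
  by_contra! hroot
  have hext : ∀ z ∈ D, ‖p - e‖ < ‖z - e‖ := by
    intro z hz
    have := (heD.closure_left hD).notMem_of_mem_right hz
    rwa [closure_ball e he.ne', mem_closedBall, dist_eq_norm, not_le] at this
  obtain ⟨f, L, hL, hfd, hf0, hf1, hfp, hfL⟩ := exists_exterior_blaschke he (hext z₀ hz₀)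
  have hfdD : DifferentiableOn ℂ f D := hfd.mono fun z hz => (hext z hz).le
  have hf1D : ∀ z ∈ D, ‖f z‖ ≤ 1 := fun z hz => hf1 z (hext z hz).le
  obtain ⟨P, hP, hlim, hinv⟩ := exists_invariant_limit hD hF hmaps hfdD hf1D
  have hP0 : P z₀ = 0 := by
    refine tendsto_nhds_unique (hlim.tendsto_at hz₀) (tendsto_const_nhds.congr fun n => ?_)
    simp [birkhoffAverage, birkhoffSum, iterate_fixed hfix, hf0]
  have hPzero : EqOn P 0 D := by
    refine (hP.analyticOnNhd hD).eqOn_zero_of_preconnected_of_eventuallyEq_zero hconn hz₀ ?_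
    refine eventually_eq_zero_of_invariant (hF.differentiableAt (hD.mem_nhds hz₀)) hfix
      ((hP.analyticOnNhd hD) z₀ hz₀) hP0 ?_ hroot
    filter_upwards [hD.mem_nhds hz₀] with z hz using hinv z hz
  set r := ‖p - c‖ with hr
  obtain ⟨k, hk⟩ := exists_nat_gt (2 * L * r)
  have hK : closedBall c (r / 2) ⊆ D := (closedBall_subset_ball (by linarith)).trans hcD
  have hunif := (tendstoLocallyUniformlyOn_iff_forall_isCompact hD).1 hlim _ hK
    (isCompact_closedBall _ _)
  obtain ⟨N, hNsmall, hN⟩ := ((Metric.tendstoUniformlyOn_iff.1 hunif ((1 / 2) ^ k)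
    (by positivity)).and ((eventually_gt_atTop 0).filter_mono Nat.hyperfilter_le_atTop)).exists
  have hN' : (0 : ℝ) < N := by exact_mod_cast hN
  have hN0 : (N : ℂ) ≠ 0 := by exact_mod_cast hN.ne'
  have hupper : ∀ z ∈ ball c r, r / 2 < ‖z - c‖ →
      ‖birkhoffAverage ℂ F f N z‖ ≤ (‖z - c‖ / r) ^ k := fun z hz hz2 =>
    norm_le_pow_of_norm_le_half_pow ((differentiableOn_birkhoffAverage hF hmaps hfdD N).mono hcD)
      (fun w hw => norm_birkhoffAverage_le hmaps hf1D N (hcD hw))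
      (fun w hw => by simpa [hPzero (hK hw)] using (hNsmall w hw).le) hz hz2
  have horbit : ∀ᶠ z in 𝓝[D] p, ∀ n ∈ Finset.range N, ‖F^[n] z - p‖ ≤ 2 * ‖z - p‖ := by
    rw [Finset.eventually_all]
    intro n _
    filter_upwards [(iterate_sub_isLittleO hmaps ho n).bound one_pos] with z hz
    have := norm_add_le (F^[n] z - z) (z - p)
    rw [sub_add_sub_cancel] at this
    linarith
  have hlower : ∀ᶠ z in 𝓝[D] p, 1 - 2 * L * ‖z - p‖ ≤ ‖birkhoffAverage ℂ F f N z‖ := by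
    filter_upwards [horbit, self_mem_nhdsWithin] with z hz hzD
    have hdiff : birkhoffAverage ℂ F f N z - f p
        = (N : ℂ)⁻¹ • ∑ n ∈ Finset.range N, (f (F^[n] z) - f p) := by
      simp [birkhoffAverage, birkhoffSum, mul_sub, hN0]
    have hle : ‖birkhoffAverage ℂ F f N z - f p‖ ≤ 2 * L * ‖z - p‖ := by
      rw [hdiff, norm_smul, norm_inv, Complex.norm_natCast, inv_mul_le_iff₀ hN']
      refine (norm_sum_le _ _).trans ((Finset.sum_le_card_nsmul _ _ (2 * L * ‖z - p‖)
        fun n hn => ?_).trans_eq (by simp))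
      refine (hfL _ _ (hext _ (hmaps.iterate n hzD)).le le_rfl).trans ?_
      have := mul_le_mul_of_nonneg_left (hz n hn) hL.le
      linarith
    have := norm_sub_norm_le (f p) (birkhoffAverage ℂ F f N z)
    rw [norm_sub_rev, hfp p rfl] at this
    linarith
  have hineq : ∀ᶠ t : ℝ in 𝓝[>] 0, (k : ℝ) ≤ 2 * L * r * (1 + k * t) := by
    filter_upwards [(tendsto_radial hc hcD).eventually hlower,
      Ioo_mem_nhdsGT (by norm_num : (0 : ℝ) < 1 / 2)] with t ht htI
    have ht0 : 0 < t := htI.1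
    have hcd : ‖p + t • (c - p) - c‖ = (1 - t) * r :=
      norm_radial_sub_right (by linarith [htI.2])
    have hup := hupper _ (radial_mem_ball hc ⟨ht0, by linarith [htI.2]⟩)
      (by rw [hcd]; nlinarith [htI.2])
    rw [hcd, mul_div_cancel_right₀ _ hc.ne'] at hup
    rw [norm_radial_sub_left ht0.le] at ht
    have hbern : (1 - t) ^ k * (1 + k * t) ≤ 1 := by
      have h1t : 0 ≤ 1 - t := by linarith [htI.2]
      calc (1 - t) ^ k * (1 + k * t) ≤ (1 - t) ^ k * (1 + t) ^ k := by
            gcongr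
            exact one_add_mul_le_pow (by linarith) k
        _ = (1 - t ^ 2) ^ k := by rw [← mul_pow]; ring
        _ ≤ 1 := pow_le_one₀ (by nlinarith [htI.2]) (by nlinarith)
    have h3 : (1 - 2 * L * (t * r)) * (1 + k * t) ≤ 1 :=
      (mul_le_mul_of_nonneg_right (ht.trans hup) (by positivity)).trans hbern
    have h4 : t * k ≤ t * (2 * L * r * (1 + k * t)) := by linarith
    exact le_of_mul_le_mul_left h4 ht0
  have hlimt : Tendsto (fun t : ℝ => 2 * L * r * (1 + k * t)) (𝓝[>] 0) (𝓝 (2 * L * r)) := by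
    have : Tendsto (fun t : ℝ => 2 * L * r * (1 + k * t)) (𝓝 0) (𝓝 (2 * L * r * (1 + k * 0))) :=
      (by fun_prop : Continuous fun t : ℝ => 2 * L * r * (1 + k * t)).tendsto 0
    rw [mul_zero, add_zero, mul_one] at this
    exact this.mono_left nhdsWithin_le_nhds
  exact absurd (ge_of_tendsto hlimt hineq) (not_le.2 hk)

/-- A periodic holomorphic self-map tangent to the identity at a boundary point admitting an interior
tangent disc is the identity. -/
theorem eqOn_id_of_iterate_eqOn_id {D : Set ℂ} (hD : IsOpen D) (hconn : IsPreconnected D)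
    {F : ℂ → ℂ} (hF : DifferentiableOn ℂ F D) (hmaps : MapsTo F D D) {q : ℕ} (hq : q ≠ 0)
    (hper : EqOn F^[q] id D) {p c : ℂ} (hc : 0 < ‖p - c‖) (hcD : ball c ‖p - c‖ ⊆ D)
    (ho : (fun z => F z - z) =o[𝓝[D] p] fun z => z - p) : EqOn F id D := by
  have hq' : (q : ℂ) ≠ 0 := by exact_mod_cast hq
  set E : ℂ → ℂ := fun z => birkhoffAverage ℂ F id q z - z with hE
  have hEd : DifferentiableOn ℂ E D :=
    (differentiableOn_birkhoffAverage hF hmaps differentiableOn_id q).sub differentiableOn_id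
  have hEF : ∀ z ∈ D, E (F z) - E z = -(F z - z) := by
    intro z hz
    have := birkhoffAverage_apply_sub_birkhoffAverage (R := ℂ) F id q z
    rw [hper hz, id, sub_self, smul_zero] at this
    simp only [hE]
    linear_combination this
  have hEo : E =o[𝓝[D] p] fun z => z - p := by
    have := (Asymptotics.IsLittleO.sum (s := Finset.range q) fun n _ =>
      iterate_sub_isLittleO hmaps ho n).const_mul_left (q : ℂ)⁻¹
    refine this.congr_left fun z => ?_
    simp [hE, birkhoffAverage, birkhoffSum, mul_sub, hq']
  have hev := (hEo.bound (by norm_num : (0 : ℝ) < 1 / 8)).and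
    (ho.bound (by norm_num : (0 : ℝ) < 1 / 2))
  obtain ⟨δ, hδ, hball⟩ := Metric.mem_nhdsWithin_iff.1 hev
  set r := ‖p - c‖ with hr
  have hfixed : ∀ t : ℝ, 0 < t → t < 1 → 2 * (t * r) < δ →
      F (p + t • (c - p)) = p + t • (c - p) := by
    intro t ht0 ht1 htδ
    set w := p + t • (c - p) with hw
    have hwp : ‖w - p‖ = t * r := norm_radial_sub_left ht0.le
    have hwc : ‖w - c‖ = (1 - t) * r := norm_radial_sub_right ht1.le
    have hR : 0 < t * r := by positivity
    have hsub : ball w (t * r) ⊆ D := fun z hz => hcD <| by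
      rw [mem_ball_iff_norm] at hz ⊢
      have := norm_add_le (z - w) (w - c)
      rw [sub_add_sub_cancel] at this
      linarith
    have hnear : ∀ z ∈ ball w (t * r), ‖z - p‖ < 2 * (t * r) := fun z hz => by
      rw [mem_ball_iff_norm] at hz
      have := norm_add_le (z - w) (w - p)
      rw [sub_add_sub_cancel] at this
      linarith
    have hbound : ∀ z ∈ ball w (t * r), ‖E z‖ ≤ 1 / 8 * ‖z - p‖ ∧ ‖F z - z‖ ≤ 1 / 2 * ‖z - p‖ :=
      fun z hz => hball ⟨mem_ball_iff_norm.2 ((hnear z hz).trans htδ), hsub hz⟩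
    have hwm : w ∈ ball w (t * r) := mem_ball_self hR
    have hFw := (hbound w hwm).2
    have hschwarz := Complex.dist_le_div_mul_dist_of_mapsTo_ball (R₂ := t * r / 2)
      (hEd.mono hsub) (fun z hz => by
        rw [mem_closedBall, dist_eq_norm]
        have h1 := (hbound z hz).1
        have h2 := (hbound w hwm).1
        linarith [norm_sub_le (E z) (E w), hnear z hz, hnear w hwm])
      (show F w ∈ ball w (t * r) by rw [mem_ball_iff_norm]; linarith)
    rw [dist_eq_norm, dist_eq_norm, hEF w (hsub hwm), norm_neg,
      (by field_simp : t * r / 2 / (t * r) = 1 / 2)] at hschwarz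
    have : ‖F w - w‖ ≤ 0 := by linarith
    exact sub_eq_zero.1 (norm_le_zero_iff.1 this)
  obtain ⟨t₀, ht₀, ht₁, htδ⟩ : ∃ t : ℝ, 0 < t ∧ t < 1 ∧ 2 * (t * r) < δ := by
    have h1 : Tendsto (fun t : ℝ => 2 * (t * r)) (𝓝[>] 0) (𝓝 0) := by
      have : Tendsto (fun t : ℝ => 2 * (t * r)) (𝓝 0) (𝓝 (2 * (0 * r))) :=
        (by fun_prop : Continuous fun t : ℝ => 2 * (t * r)).tendsto 0
      rw [zero_mul, mul_zero] at this
      exact this.mono_left nhdsWithin_le_nhds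
    obtain ⟨t, h, ht⟩ := ((h1.eventually (gt_mem_nhds hδ)).and (Ioo_mem_nhdsGT one_pos)).exists
    exact ⟨t, ht.1, ht.2, h⟩
  have hcp : c - p ≠ 0 := by
    rw [← norm_pos_iff, norm_sub_rev]; exact hc
  have hcont : Continuous fun t : ℝ => p + t • (c - p) := by fun_prop
  have htend : Tendsto (fun t : ℝ => p + t • (c - p)) (𝓝[≠] t₀) (𝓝[≠] (p + t₀ • (c - p))) := by
    refine tendsto_nhdsWithin_iff.2 ⟨(hcont.tendsto t₀).mono_left nhdsWithin_le_nhds, ?_⟩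
    filter_upwards [self_mem_nhdsWithin] with t ht h
    exact ht (smul_left_injective ℝ hcp (add_left_cancel h))
  refine (hF.analyticOnNhd hD).eqOn_of_preconnected_of_frequently_eq
    (differentiableOn_id.analyticOnNhd hD) hconn (hcD (radial_mem_ball hc ⟨ht₀, ht₁⟩))
    (htend.frequently (Eventually.frequently ?_))
  have hδt : ∀ᶠ t in 𝓝 t₀, 2 * (t * r) < δ :=
    (by fun_prop : Continuous fun t : ℝ => 2 * (t * r)).tendsto t₀ |>.eventually (gt_mem_nhds htδ)
  filter_upwards [mem_nhdsWithin_of_mem_nhds (Ioo_mem_nhds ht₀ ht₁),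
    mem_nhdsWithin_of_mem_nhds hδt] with t ht htδ using hfixed t ht.1 ht.2 htδ

theorem huang_dim_one_interior_fixed_point
    (D : Set ℂ) (hD : IsOpen D ∧ IsConnected D) (hbd : Bornology.IsBounded D)
    (ρ : ℂ → ℝ)
    (hρ : ContDiff ℝ (⊤ : ℕ∞) ρ ∧ D = {z | ρ z < 0} ∧ frontier D = {z | ρ z = 0} ∧
      ∀ q ∈ frontier D, fderiv ℝ ρ q ≠ 0)
    (p : ℂ) (hp : p ∈ frontier D)
    (F : ℂ → ℂ) (hF : DifferentiableOn ℂ F D) (hFself : MapsTo F D D)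
    (z₀ : ℂ) (hz₀ : z₀ ∈ D) (hfix : F z₀ = z₀)
    (ho : Tendsto (fun z => ‖F z - z‖ / ‖z - p‖ ^ 1) (𝓝[D] p) (𝓝 0)) :
    ∀ z ∈ D, F z = z := by
  obtain ⟨hsmooth, hDρ, hfr, hdρ⟩ := hρ
  have hρ2 : ContDiff ℝ 2 ρ := hsmooth.of_le (WithTop.coe_le_coe.2 le_top)
  have hρp : ρ p = 0 := by
    rw [hfr] at hp
    exact hp
  obtain ⟨e, he, heρ⟩ := exists_ball_subset_pos hρ2 hρp (hdρ p hp)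
  obtain ⟨c, hc, hcρ⟩ := exists_ball_subset_pos (ρ := fun z => -ρ z) (p := p) hρ2.neg
    (by simp [hρp])
    (by rw [fderiv_fun_neg]; exact neg_ne_zero.2 (hdρ p hp))
  have hcD : ball c ‖p - c‖ ⊆ D := fun z hz => by
    rw [hDρ]
    have : 0 < -ρ z := hcρ hz
    exact neg_pos.1 this
  have heD : Disjoint (ball e ‖p - e‖) D := Set.disjoint_left.2 fun z hz hzD => by
    have h1 : 0 < ρ z := heρ hz
    have h2 : ρ z < 0 := by rwa [hDρ] at hzD
    exact lt_asymm h1 h2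
  have hpD : p ∉ D := by
    rw [hDρ]
    exact hρp.not_lt
  have hlo : (fun z => F z - z) =o[𝓝[D] p] fun z => z - p := by
    rw [← Asymptotics.isLittleO_norm_norm, Asymptotics.isLittleO_iff_tendsto']
    · simpa using ho
    · filter_upwards [self_mem_nhdsWithin] with z hz h
      exact absurd (sub_eq_zero.1 (norm_eq_zero.1 h) ▸ hz) hpD
  have hconn := hD.2.isPreconnected
  obtain ⟨k, hk, hroot⟩ :=
    exists_deriv_pow_eq_one hD.1 hconn hF hFself hz₀ hfix hc hcD he heD hlo
  have hFd := (hF.differentiableAt (hD.1.mem_nhds hz₀)).hasDerivAt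
  have hper : EqOn F^[k] id D :=
    eqOn_id_of_deriv_eq_one hD.1 hconn hbd (hF.iterate hFself k) (hFself.iterate k) hz₀
      (iterate_fixed hfix k) ((HasDerivAt.iterate z₀ hFd hfix k).deriv.trans hroot)
  exact eqOn_id_of_iterate_eqOn_id hD.1 hconn hF hFself hk hper hc hcD hlo
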